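/- Let A ∈ ℝ^{n×d} have full column rank with condition number κ(A) = σ_max(A)/σ_min(A), let b₄ ∈ ℝ^d, let ε₄ ∈ (0,1), and set ε₂ = 0.1·ε₄/κ(A)² (so ε₂ < 1). Suppose y' ∈ ℝ^d satisfies ‖AᵀA y' − b₄‖₂ ≤ ε₂ ‖b₄‖₂ and x' ∈ ℝ^d satisfies ‖AᵀA x' − y'‖₂ ≤ ε₂ ‖y'‖₂. Then ‖AᵀA AᵀA x' − b₄‖₂ ≤ ε₄ ‖b₄‖₂. -/

import Mathlib

open Matrix
open scoped BigOperators

/-- The Euclidean (`ℓ₂`) norm of a vector in `ℝ^n`. -/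
noncomputable def vnorm {n : ℕ} (v : Fin n → ℝ) : ℝ :=
  Real.sqrt (∑ i, v i ^ 2)

/-- The minimum singular value `σ_min(A) = min_{‖x‖₂ = 1} ‖Ax‖₂`. -/
noncomputable def sigmaMin {n d : ℕ} (A : Matrix (Fin n) (Fin d) ℝ) : ℝ :=
  sInf {c : ℝ | ∃ x : Fin d → ℝ, vnorm x = 1 ∧ c = vnorm (A.mulVec x)}

/-- The maximum singular value (spectral / operator norm)
`σ_max(A) = ‖A‖ = max_{‖x‖₂ = 1} ‖Ax‖₂`. -/
noncomputable def sigmaMax {n d : ℕ} (A : Matrix (Fin n) (Fin d) ℝ) : ℝ :=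
  sSup {c : ℝ | ∃ x : Fin d → ℝ, vnorm x = 1 ∧ c = vnorm (A.mulVec x)}

/-- The condition number `κ(A) = σ_max(A) / σ_min(A)`. -/
noncomputable def kappa {n d : ℕ} (A : Matrix (Fin n) (Fin d) ℝ) : ℝ :=
  sigmaMax A / sigmaMin A

lemma vnorm_eq {n : ℕ} (v : Fin n → ℝ) : vnorm v = ‖WithLp.toLp 2 v‖ := by
  simp [vnorm, EuclideanSpace.norm_eq]

lemma vnorm_nonneg {n : ℕ} (v : Fin n → ℝ) : 0 ≤ vnorm v := Real.sqrt_nonneg _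

lemma vnorm_add_le {n : ℕ} (v w : Fin n → ℝ) : vnorm (v + w) ≤ vnorm v + vnorm w := by
  simp only [vnorm_eq, WithLp.toLp_add]
  exact norm_add_le _ _

lemma vnorm_smul {n : ℕ} (c : ℝ) (v : Fin n → ℝ) : vnorm (c • v) = |c| * vnorm v := by
  simp only [vnorm_eq, WithLp.toLp_smul, norm_smul, Real.norm_eq_abs]

lemma vnorm_eq_zero {n : ℕ} {v : Fin n → ℝ} : vnorm v = 0 ↔ v = 0 := by
  rw [vnorm_eq, norm_eq_zero, WithLp.toLp_eq_zero]

lemma vnorm_sq {n : ℕ} (v : Fin n → ℝ) : vnorm v ^ 2 = v ⬝ᵥ v := by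
  rw [vnorm, Real.sq_sqrt (Finset.sum_nonneg fun i _ => sq_nonneg _)]
  simp [dotProduct, sq]

lemma dot_le_vnorm {n : ℕ} (v w : Fin n → ℝ) : v ⬝ᵥ w ≤ vnorm v * vnorm w :=
  Real.sum_mul_le_sqrt_mul_sqrt _ _ _

lemma sigma_set_compact {n d : ℕ} (A : Matrix (Fin n) (Fin d) ℝ) :
    IsCompact {c : ℝ | ∃ x : Fin d → ℝ, vnorm x = 1 ∧ c = vnorm (A.mulVec x)} := by
  have h : {c : ℝ | ∃ x : Fin d → ℝ, vnorm x = 1 ∧ c = vnorm (A.mulVec x)} =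
      (fun x : EuclideanSpace ℝ (Fin d) => vnorm (A.mulVec x.ofLp)) '' Metric.sphere 0 1 := by
    ext c
    constructor
    · rintro ⟨x, hx, rfl⟩
      exact ⟨WithLp.toLp 2 x, by simpa [vnorm_eq] using hx, rfl⟩
    · rintro ⟨x, hx, rfl⟩
      exact ⟨x.ofLp, by simpa [vnorm_eq] using hx, rfl⟩
  rw [h]
  apply (isCompact_sphere _ _).image
  unfold vnorm Matrix.mulVec dotProduct
  fun_prop

lemma vnorm_normalize {d : ℕ} {x : Fin d → ℝ} (hx : x ≠ 0) :
    vnorm ((vnorm x)⁻¹ • x) = 1 := by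
  have h : vnorm x ≠ 0 := fun h => hx (vnorm_eq_zero.1 h)
  rw [vnorm_smul, abs_of_nonneg (inv_nonneg.2 (vnorm_nonneg x)), inv_mul_cancel₀ h]

lemma sigma_bounds {n d : ℕ} (A : Matrix (Fin n) (Fin d) ℝ) (x : Fin d → ℝ) :
    sigmaMin A * vnorm x ≤ vnorm (A.mulVec x) ∧ vnorm (A.mulVec x) ≤ sigmaMax A * vnorm x := by
  by_cases hx : x = 0
  · subst hx
    simp [vnorm]
  have h0 : vnorm x ≠ 0 := fun h => hx (vnorm_eq_zero.1 h)
  have hp : 0 < vnorm x := lt_of_le_of_ne (vnorm_nonneg x) (Ne.symm h0)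
  have hm : (vnorm x)⁻¹ * vnorm (A.mulVec x) ∈
      {c : ℝ | ∃ x : Fin d → ℝ, vnorm x = 1 ∧ c = vnorm (A.mulVec x)} := by
    refine ⟨_, vnorm_normalize hx, ?_⟩
    rw [Matrix.mulVec_smul, vnorm_smul, abs_of_nonneg (inv_nonneg.2 hp.le)]
  have h1 : sigmaMin A ≤ _ := csInf_le (sigma_set_compact A).bddBelow hm
  have h2 : _ ≤ sigmaMax A := le_csSup (sigma_set_compact A).bddAbove hm
  rw [inv_mul_eq_div] at h1 h2
  exact ⟨(le_div_iff₀ hp).1 h1, (div_le_iff₀ hp).1 h2⟩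

lemma mulVec_inj_of_rank {n d : ℕ} (A : Matrix (Fin n) (Fin d) ℝ) (hrank : A.rank = d) :
    Function.Injective A.mulVec := by
  rw [Matrix.mulVec_injective_iff, linearIndependent_iff_card_eq_finrank_span]
  rw [Matrix.rank_eq_finrank_span_cols] at hrank
  simp [Set.finrank, hrank]

lemma sigmaMin_pos {n d : ℕ} (A : Matrix (Fin n) (Fin d) ℝ) (hrank : A.rank = d)
    {x : Fin d → ℝ} (hx : x ≠ 0) : 0 < sigmaMin A := by
  obtain ⟨u, hu, h⟩ := (sigma_set_compact A).sInf_mem ⟨_, _, vnorm_normalize hx, rfl⟩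
  change sigmaMin A = _ at h
  rw [h]
  refine lt_of_le_of_ne (vnorm_nonneg _) fun h0 => ?_
  have h1 : A.mulVec u = A.mulVec 0 := by rw [vnorm_eq_zero.1 h0.symm, Matrix.mulVec_zero]
  rw [mulVec_inj_of_rank A hrank h1, vnorm_eq_zero.2 rfl] at hu
  norm_num at hu

lemma gram_upper {n d : ℕ} (A : Matrix (Fin n) (Fin d) ℝ) (hS : 0 ≤ sigmaMax A)
    (x : Fin d → ℝ) : vnorm ((Aᵀ * A).mulVec x) ≤ sigmaMax A ^ 2 * vnorm x := by
  set g := (Aᵀ * A).mulVec x with hg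
  have e : vnorm g ^ 2 = A.mulVec g ⬝ᵥ A.mulVec x := by
    rw [vnorm_sq]
    nth_rewrite 2 [hg]
    rw [← Matrix.mulVec_mulVec, Matrix.dotProduct_mulVec, Matrix.vecMul_transpose]
  have h1 := dot_le_vnorm (A.mulVec g) (A.mulVec x)
  have h2 := mul_le_mul (sigma_bounds A g).2 (sigma_bounds A x).2 (vnorm_nonneg _)
    (mul_nonneg hS (vnorm_nonneg _))
  rcases (vnorm_nonneg g).eq_or_lt with h | h
  · rw [← h]
    have := vnorm_nonneg x
    positivity
  · refine le_of_mul_le_mul_left ?_ h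
    nlinarith

lemma gram_lower {n d : ℕ} (A : Matrix (Fin n) (Fin d) ℝ) (hs : 0 ≤ sigmaMin A)
    (x : Fin d → ℝ) : sigmaMin A ^ 2 * vnorm x ≤ vnorm ((Aᵀ * A).mulVec x) := by
  have e : vnorm (A.mulVec x) ^ 2 = x ⬝ᵥ (Aᵀ * A).mulVec x := by
    rw [vnorm_sq, ← Matrix.mulVec_mulVec, Matrix.dotProduct_mulVec x, Matrix.vecMul_transpose]
  have h1 := dot_le_vnorm x ((Aᵀ * A).mulVec x)
  have h2 := pow_le_pow_left₀ (mul_nonneg hs (vnorm_nonneg x)) (sigma_bounds A x).1 2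
  rcases (vnorm_nonneg x).eq_or_lt with h | h
  · rw [← h, mul_zero]
    exact vnorm_nonneg _
  · refine le_of_mul_le_mul_left ?_ h
    nlinarith

/-- Error guarantee for the four-matrix regression
`min_x ‖AᵀA AᵀA x - b₄‖₂`, solved by two successive approximate PSD regressions with
accuracy `ε₂ = 0.1·ε₄/κ(A)²`. -/
theorem four_matrix_regression_error {n d : ℕ} (A : Matrix (Fin n) (Fin d) ℝ)
    (hrank : A.rank = d) (b₄ : Fin d → ℝ)
    (ε₂ ε₄ : ℝ) (hε₄ : ε₄ ∈ Set.Ioo (0 : ℝ) 1)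
    (hε₂ : ε₂ = 0.1 * ε₄ / (kappa A) ^ 2)
    (y' x' : Fin d → ℝ)
    (hy : vnorm ((Aᵀ * A).mulVec y' - b₄) ≤ ε₂ * vnorm b₄)
    (hx : vnorm ((Aᵀ * A).mulVec x' - y') ≤ ε₂ * vnorm y') :
    vnorm ((Aᵀ * A * (Aᵀ * A)).mulVec x' - b₄) ≤ ε₄ * vnorm b₄ := by
  obtain ⟨he0, he1⟩ := hε₄
  by_cases hd : ∃ x : Fin d → ℝ, x ≠ 0
  swap
  · push Not at hd
    rw [vnorm_eq_zero.2 (hd _)]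
    exact mul_nonneg he0.le (vnorm_nonneg _)
  obtain ⟨u, hu⟩ := hd
  have hs := sigmaMin_pos A hrank hu
  have hsS : sigmaMin A ≤ sigmaMax A := by
    have h := sigma_bounds A ((vnorm u)⁻¹ • u)
    rw [vnorm_normalize hu, mul_one, mul_one] at h
    exact h.1.trans h.2
  have hS := hs.trans_le hsS
  have hk : 1 ≤ kappa A := (one_le_div hs).2 hsS
  have hk2 : 1 ≤ kappa A ^ 2 := one_le_pow₀ hk
  have hSk : sigmaMax A ^ 2 = kappa A ^ 2 * sigmaMin A ^ 2 := by
    rw [kappa, div_pow, div_mul_cancel₀ _ (by positivity)]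
  have hek : kappa A ^ 2 * ε₂ = 0.1 * ε₄ := by
    rw [hε₂, mul_div_cancel₀ _ (by positivity)]
  have he2 : 0 ≤ ε₂ := by
    rw [hε₂]
    positivity
  have he2' : ε₂ ≤ 0.1 * ε₄ := by nlinarith
  have hb := vnorm_nonneg b₄
  have split : (Aᵀ * A * (Aᵀ * A)).mulVec x' - b₄ =
      (Aᵀ * A).mulVec ((Aᵀ * A).mulVec x' - y') + ((Aᵀ * A).mulVec y' - b₄) := by
    rw [Matrix.mulVec_sub, Matrix.mulVec_mulVec]
    abel
  have h1 := gram_upper A hS.le ((Aᵀ * A).mulVec x' - y')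
  have h2 := gram_lower A hs.le y'
  have h3 : vnorm ((Aᵀ * A).mulVec y') ≤ (1 + ε₂) * vnorm b₄ := by
    have h := vnorm_add_le ((Aᵀ * A).mulVec y' - b₄) b₄
    rw [sub_add_cancel] at h
    linarith
  have h4 : sigmaMax A ^ 2 * vnorm ((Aᵀ * A).mulVec x' - y') ≤
      0.1 * ε₄ * ((1 + ε₂) * vnorm b₄) := by
    calc _ ≤ sigmaMax A ^ 2 * (ε₂ * vnorm y') := by gcongr
      _ = (kappa A ^ 2 * ε₂) * (sigmaMin A ^ 2 * vnorm y') := by rw [hSk]; ring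
      _ ≤ _ := by
        rw [hek]
        exact mul_le_mul_of_nonneg_left (h2.trans h3) (by positivity)
  rw [split]
  have h5 : 0.1 * ε₄ * ((1 + ε₂) * vnorm b₄) ≤ 0.1 * ε₄ * (2 * vnorm b₄) := by
    gcongr
    linarith
  have h6 : ε₂ * vnorm b₄ ≤ 0.1 * ε₄ * vnorm b₄ := by gcongr
  have h7 := vnorm_add_le ((Aᵀ * A).mulVec ((Aᵀ * A).mulVec x' - y')) ((Aᵀ * A).mulVec y' - b₄)
  have h8 : 0 ≤ ε₄ * vnorm b₄ := by positivity
  linarith
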